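/- (Noncommutative root space Poisson bracket algebra, identity (7).) Assume ∂ is a ℂ-linear automorphism of E with inverse ∂⁻¹. Define bilinear mappings on ℰ by K₊(φ, ψ) = −i·(∂^{⊗ord} φ) ⊗ ψ, K₋(φ, ψ) = i·ψ ⊗ (∂^{⊗ord} φ), K₀₀(φ, ψ) = −i·(φ ⊗ ψ − ψ ⊗ φ), and K₀(φ, ψ) = −i·(∂⁻¹)^{⊗ord}( D²_{ord φ}(φ ˆ ψ) ) on nonempty words. Then for all nonempty words φ, ψ, χ over E: K₀₀(ψ, K₀(φ, χ)) = K₀(K₊(ψ, φ), χ) + K₀(φ, K₋(ψ, χ)) in ℰ. -/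

import Mathlib

/-- The gluing (concatenation) operation on words over `E`:
`(xs ++ [a]) ˆ (b :: ys) = xs ++ [a * b] ++ ys`. -/
def glue {E : Type*} [Mul E] : List E → List E → List E
  | [], ys => ys
  | [a], [] => [a]
  | [a], b :: ys => (a * b) :: ys
  | a :: b :: as, ys => a :: glue (b :: as) ys

/-- `applyAt f k w` applies `f` to the `k`-th (1-based) entry of the word `w`. -/
def applyAt {E : Type*} (f : E → E) : ℕ → List E → List E
  | _, [] => []
  | 0, w => w
  | 1, a :: as => f a :: as
  | k+2, a :: as => a :: applyAt f (k+1) as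

/-- The basis element of the root space `ℰ` (the monoid algebra of the free
monoid on `E` over `ℂ`) corresponding to the word `w`, representing the
pure tensor `w₁ ⊗ ⋯ ⊗ w_N`. -/
noncomputable def bw {E : Type*} (w : List E) : MonoidAlgebra ℂ (FreeMonoid E) :=
  MonoidAlgebra.single (FreeMonoid.ofList w) 1

/-!
Both `glue φ χ` and `D²` act only near the junction of `φ` and `χ`, so they commute with
concatenating a word to the left of `φ` or to the right of `χ`. The outer `(∂⁻¹)^{⊗ord}` then
cancels the `∂^{⊗ord}` that `K₊` and `K₋` put on `ψ`, so the two terms on the right are the two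
terms of the commutator of `ψ` with `K₀(φ, χ)`.
-/

section Glue

variable {E : Type*} [Mul E]

theorem glue_append_left (ψ χ : List E) {φ : List E} (hφ : φ ≠ []) :
    glue (ψ ++ φ) χ = ψ ++ glue φ χ := by
  induction ψ with
  | nil => rfl
  | cons a ψ ih =>
    obtain ⟨b, w, hw⟩ := List.exists_cons_of_ne_nil (List.append_ne_nil_of_right_ne_nil ψ hφ)
    rw [List.cons_append, List.cons_append, ← ih, hw, glue]

theorem glue_append_right (φ ψ : List E) {χ : List E} (hχ : χ ≠ []) :
    glue φ (χ ++ ψ) = glue φ χ ++ ψ := by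
  obtain ⟨c, χ, rfl⟩ := List.exists_cons_of_ne_nil hχ
  induction φ with
  | nil => rfl
  | cons a φ ih =>
    cases φ with
    | nil => rfl
    | cons b φ => rw [glue, ih, glue, List.cons_append]

theorem length_le_length_glue (φ χ : List E) : φ.length ≤ (glue φ χ).length := by
  induction φ with
  | nil => exact Nat.zero_le _
  | cons a φ ih =>
    cases φ with
    | nil => cases χ <;> simp [glue]
    | cons b φ => simpa [glue] using ih

end Glue

section ApplyAt

variable {E : Type*} (f : E → E)

theorem applyAt_succ_eq_modify (k : ℕ) (w : List E) : applyAt f (k + 1) w = w.modify k f := by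
  induction w generalizing k with
  | nil => simp [applyAt]
  | cons a w ih => cases k <;> simp [applyAt, ih]

theorem length_applyAt (k : ℕ) (w : List E) : (applyAt f k w).length = w.length := by
  cases k with
  | zero => cases w <;> rfl
  | succ k => rw [applyAt_succ_eq_modify, List.length_modify]

theorem applyAt_append_left (ψ w : List E) {k : ℕ} (hk : k ≠ 0) :
    applyAt f (ψ.length + k) (ψ ++ w) = ψ ++ applyAt f k w := by
  obtain ⟨k, rfl⟩ := Nat.exists_eq_succ_of_ne_zero hk
  induction ψ with
  | nil => simp
  | cons a ψ ih =>
    simp only [Nat.succ_eq_add_one, ← Nat.add_assoc, applyAt_succ_eq_modify] at ih ⊢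
    simp [Nat.add_right_comm, ih]

theorem applyAt_append_right (ψ : List E) {k : ℕ} {w : List E} (hk : k ≤ w.length) :
    applyAt f k (w ++ ψ) = applyAt f k w ++ ψ := by
  cases k with
  | zero => cases w <;> cases ψ <;> rfl
  | succ k =>
    simp only [applyAt_succ_eq_modify]
    induction w generalizing k with
    | nil => simp at hk
    | cons a w ih => cases k <;> simp_all

end ApplyAt

/-- The word `e^{⊗ord} (f_{ord φ} (φ ˆ χ))`, where `f_k` applies `f` to the `k`-th entry. With
`e = ∂⁻¹` and `f = ∂ ∘ ∂` it is the word that occurs in `K₀(φ, χ)`. -/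
def twistedGlue {E : Type*} [Mul E] (e f : E → E) (φ χ : List E) : List E :=
  (applyAt f φ.length (glue φ χ)).map e

section TwistedGlue

variable {E : Type*} [Mul E]

theorem twistedGlue_ne_nil (e f : E → E) {φ : List E} (χ : List E) (hφ : φ ≠ []) :
    twistedGlue e f φ χ ≠ [] := by
  have hlen : φ.length ≤ (twistedGlue e f φ χ).length := by
    simpa only [twistedGlue, List.length_map, length_applyAt] using length_le_length_glue φ χ
  exact List.ne_nil_of_length_pos ((List.length_pos_of_ne_nil hφ).trans_le hlen)

variable {d e : E → E} (f : E → E)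

theorem twistedGlue_map_append (hed : Function.LeftInverse e d) (ψ χ : List E) {φ : List E}
    (hφ : φ ≠ []) : twistedGlue e f (ψ.map d ++ φ) χ = ψ ++ twistedGlue e f φ χ := by
  rw [twistedGlue, glue_append_left _ _ hφ, List.length_append,
    applyAt_append_left _ _ _ (List.length_eq_zero_iff.not.mpr hφ), List.map_append,
    hed.list_map ψ, twistedGlue]

theorem twistedGlue_append_map (hed : Function.LeftInverse e d) (φ ψ : List E) {χ : List E}
    (hχ : χ ≠ []) : twistedGlue e f φ (χ ++ ψ.map d) = twistedGlue e f φ χ ++ ψ := by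
  rw [twistedGlue, glue_append_right _ _ hχ, applyAt_append_right _ _ (length_le_length_glue φ χ),
    List.map_append, hed.list_map ψ, twistedGlue]

end TwistedGlue

theorem ncrs_poisson_7_general {E : Type*} [Mul E] {d e : E → E} (hed : Function.LeftInverse e d)
    (f : E → E)
    {Kp Km K00 K0 : MonoidAlgebra ℂ (FreeMonoid E) →ₗ[ℂ]
      MonoidAlgebra ℂ (FreeMonoid E) →ₗ[ℂ] MonoidAlgebra ℂ (FreeMonoid E)}
    (hp : ∀ φ ψ : List E, φ ≠ [] → ψ ≠ [] →
      Kp (bw φ) (bw ψ) = (-Complex.I) • bw (φ.map d ++ ψ))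
    (hm : ∀ φ ψ : List E, φ ≠ [] → ψ ≠ [] →
      Km (bw φ) (bw ψ) = Complex.I • bw (ψ ++ φ.map d))
    (h00 : ∀ φ ψ : List E, φ ≠ [] → ψ ≠ [] →
      K00 (bw φ) (bw ψ) = (-Complex.I) • (bw (φ ++ ψ) - bw (ψ ++ φ)))
    (h0 : ∀ φ ψ : List E, φ ≠ [] → ψ ≠ [] →
      K0 (bw φ) (bw ψ) = (-Complex.I) • bw (twistedGlue e f φ ψ))
    {φ ψ χ : List E} (hφ : φ ≠ []) (hψ : ψ ≠ []) (hχ : χ ≠ []) :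
    K00 (bw ψ) (K0 (bw φ) (bw χ)) =
      K0 (Kp (bw ψ) (bw φ)) (bw χ) + K0 (bw φ) (Km (bw ψ) (bw χ)) := by
  set w := twistedGlue e f φ χ
  have commutator_term : K00 (bw ψ) (K0 (bw φ) (bw χ)) =
      (-Complex.I) • (-Complex.I) • (bw (ψ ++ w) - bw (w ++ ψ)) := by
    rw [h0 φ χ hφ hχ, map_smul, h00 ψ _ hψ (twistedGlue_ne_nil e f χ hφ)]
  have left_term : K0 (Kp (bw ψ) (bw φ)) (bw χ) =
      (-Complex.I) • (-Complex.I) • bw (ψ ++ w) := by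
    rw [hp ψ φ hψ hφ, map_smul, LinearMap.smul_apply,
      h0 _ χ (List.append_ne_nil_of_right_ne_nil _ hφ) hχ, twistedGlue_map_append f hed ψ χ hφ]
  have right_term : K0 (bw φ) (Km (bw ψ) (bw χ)) =
      Complex.I • (-Complex.I) • bw (w ++ ψ) := by
    rw [hm ψ χ hψ hχ, map_smul, h0 φ _ hφ (List.append_ne_nil_of_left_ne_nil hχ _),
      twistedGlue_append_map f hed φ ψ hχ]
  rw [commutator_term, left_term, right_term]
  module

/-- the noncommutative root space Poisson bracket continual Lie
algebra, identity (7). `∂` is a `ℂ`-linear automorphism of `E` with inverse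
`∂⁻¹`; on nonempty basis words
`K₀(φ, ψ) = −i·(∂⁻¹)^{⊗ord}( D²_{ord φ}(φ ˆ ψ) )`. -/
theorem ncrs_poisson_7
    (E : Type*) [Ring E] [Algebra ℂ E] (d : E ≃ₗ[ℂ] E)
    (Kp Km K00 K0 : MonoidAlgebra ℂ (FreeMonoid E) →ₗ[ℂ]
         MonoidAlgebra ℂ (FreeMonoid E) →ₗ[ℂ] MonoidAlgebra ℂ (FreeMonoid E))
    (hp : ∀ φ ψ : List E, φ ≠ [] → ψ ≠ [] →
      Kp (bw φ) (bw ψ) = (-Complex.I) • bw (φ.map ⇑d ++ ψ))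
    (hm : ∀ φ ψ : List E, φ ≠ [] → ψ ≠ [] →
      Km (bw φ) (bw ψ) = Complex.I • bw (ψ ++ φ.map ⇑d))
    (h00 : ∀ φ ψ : List E, φ ≠ [] → ψ ≠ [] →
      K00 (bw φ) (bw ψ) = (-Complex.I) • (bw (φ ++ ψ) - bw (ψ ++ φ)))
    (h0 : ∀ φ ψ : List E, φ ≠ [] → ψ ≠ [] →
      K0 (bw φ) (bw ψ) =
        (-Complex.I) •
          bw ((applyAt (fun x => d (d x)) φ.length (glue φ ψ)).map ⇑d.symm))
    (hz : ∀ x, Kp (bw ([] : List E)) x = 0 ∧ Kp x (bw ([] : List E)) = 0 ∧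
               Km (bw ([] : List E)) x = 0 ∧ Km x (bw ([] : List E)) = 0 ∧
               K00 (bw ([] : List E)) x = 0 ∧ K00 x (bw ([] : List E)) = 0 ∧
               K0 (bw ([] : List E)) x = 0 ∧ K0 x (bw ([] : List E)) = 0) :
    ∀ φ ψ χ : List E, φ ≠ [] → ψ ≠ [] → χ ≠ [] →
      K00 (bw ψ) (K0 (bw φ) (bw χ)) =
        K0 (Kp (bw ψ) (bw φ)) (bw χ) + K0 (bw φ) (Km (bw ψ) (bw χ)) := by
  intro φ ψ χ hφ hψ hχ
  exact ncrs_poisson_7_general d.symm_apply_apply (fun x => d (d x)) hp hm h00 h0 hφ hψ hχ
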